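/- Let p > 2 and μ > 0, and let u = u_{μ,*} with u_{μ,*}(s) = (p μ / 2)^{1/(p-2)} (cosh(((p-2)/2) √μ s))^{-2/(p-2)}. Then: (i) ∫_ℝ u^{2(p-1)} ds = (p² μ/(3p-2)) ∫_ℝ u^p ds; (ii) ∫_ℝ u^{3p-4} ds = (2 p³ (p-1) μ²/((3p-2)(5p-6))) ∫_ℝ u^p ds; and (iii) ∫_ℝ |(u^{p/2})'|² ds = (p² (p-2) μ/(4(3p-2))) ∫_ℝ u^p ds. -/

import Mathlib

open MeasureTheory

/-!
Every power of the soliton is a constant times a negative power of a rescaled `cosh`, so all three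
identities reduce to a Wallis-type recursion: integrating the derivative
`(sinh x * cosh x ^ (-a - 1))' = (a + 1) * cosh x ^ (-(a + 2)) - a * cosh x ^ (-a)` over `ℝ` gives
`(a + 1) * ∫ cosh ^ (-(a + 2)) = a * ∫ cosh ^ (-a)`. Raising the exponent of the soliton from `q`
to `q + (p - 2)` is exactly one step of this recursion; (i) is the step from `q = p`, (ii) iterates
it once more, and (iii) follows from
`((cosh x ^ (-b))') ^ 2 = b ^ 2 * (cosh x ^ (-(2 * b)) - cosh x ^ (-(2 * b + 2)))`.
-/

open Filter Real

lemma continuous_cosh_rpow (b : ℝ) : Continuous fun x : ℝ => cosh x ^ b :=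
  continuous_cosh.rpow_const fun x => Or.inl (cosh_pos x).ne'

lemma cosh_rpow_neg_le_exp {a : ℝ} (ha : 0 ≤ a) (x : ℝ) :
    cosh x ^ (-a) ≤ 2 ^ a * exp (-a * x) := by
  have hexp : exp x / 2 ≤ cosh x := by
    rw [cosh_eq]
    linarith [exp_pos (-x)]
  calc cosh x ^ (-a) ≤ (exp x / 2) ^ (-a) :=
        rpow_le_rpow_of_nonpos (by positivity) hexp (neg_nonpos.2 ha)
    _ = 2 ^ a * exp (-a * x) := by
        rw [div_rpow (exp_pos x).le zero_le_two, ← exp_mul, rpow_neg zero_le_two, div_inv_eq_mul,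
          mul_comm, mul_comm x]

lemma integrable_cosh_rpow_neg {a : ℝ} (ha : 0 < a) :
    Integrable fun x : ℝ => cosh x ^ (-a) := by
  refine (continuous_cosh_rpow (-a)).locallyIntegrable
    |>.integrable_of_isBigO_atTop_of_norm_isNegInvariant (g := fun x => exp (-a * x)) ?_ ?_ ?_
  · exact .of_forall fun x => by simp only [Function.comp_apply, cosh_neg]
  · refine .of_bound (2 ^ a) (.of_forall fun x => ?_)
    rw [norm_of_nonneg (rpow_nonneg (cosh_pos x).le _), norm_of_nonneg (exp_pos _).le]
    exact cosh_rpow_neg_le_exp ha.le x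
  · exact ⟨Set.Ioi 0, Ioi_mem_atTop 0, exp_neg_integrableOn_Ioi 0 ha⟩

lemma cosh_mul_cosh_rpow_sub_one (b x : ℝ) : cosh x * cosh x ^ (b - 1) = cosh x ^ b := by
  rw [mul_comm, ← rpow_add_one (cosh_pos x).ne', sub_add_cancel]

lemma abs_sinh_le_cosh (x : ℝ) : |sinh x| ≤ cosh x := by
  rw [abs_sinh, ← cosh_abs]
  exact (sinh_lt_cosh _).le

lemma integrable_sinh_mul_cosh_rpow {a : ℝ} (ha : 0 < a) :
    Integrable fun x : ℝ => sinh x * cosh x ^ (-a - 1) := by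
  refine (integrable_cosh_rpow_neg ha).mono'
    (continuous_sinh.mul (continuous_cosh_rpow _)).aestronglyMeasurable (.of_forall fun x => ?_)
  have hpow : 0 ≤ cosh x ^ (-a - 1) := rpow_nonneg (cosh_pos x).le _
  calc ‖sinh x * cosh x ^ (-a - 1)‖ = |sinh x| * cosh x ^ (-a - 1) := by
        rw [norm_mul, norm_of_nonneg hpow, norm_eq_abs]
    _ ≤ cosh x * cosh x ^ (-a - 1) := by gcongr; exact abs_sinh_le_cosh x
    _ = cosh x ^ (-a) := cosh_mul_cosh_rpow_sub_one (-a) x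

lemma hasDerivAt_cosh_rpow (b x : ℝ) :
    HasDerivAt (fun x => cosh x ^ b) (b * sinh x * cosh x ^ (b - 1)) x := by
  convert (hasDerivAt_cosh x).rpow_const (p := b) (Or.inl (cosh_pos x).ne') using 1
  ring

lemma sinh_sq_mul_cosh_rpow (b x : ℝ) :
    sinh x ^ 2 * cosh x ^ b = cosh x ^ (b + 2) - cosh x ^ b := by
  rw [sinh_sq, rpow_add (cosh_pos x), rpow_two]
  ring

lemma hasDerivAt_sinh_mul_cosh_rpow (a x : ℝ) :
    HasDerivAt (fun x => sinh x * cosh x ^ (-a - 1))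
      ((a + 1) * cosh x ^ (-(a + 2)) - a * cosh x ^ (-a)) x := by
  refine ((hasDerivAt_sinh x).mul (hasDerivAt_cosh_rpow (-a - 1) x)).congr_deriv ?_
  have hsinh := sinh_sq_mul_cosh_rpow (-(a + 2)) x
  rw [neg_add, neg_add_cancel_right, ← neg_add] at hsinh
  rw [show -a - 1 - 1 = -(a + 2) by ring]
  linear_combination cosh_mul_cosh_rpow_sub_one (-a) x - (a + 1) * hsinh

lemma integral_cosh_rpow_neg_add_two {a : ℝ} (ha : 0 < a) :
    ∫ x : ℝ, cosh x ^ (-(a + 2)) = a / (a + 1) * ∫ x : ℝ, cosh x ^ (-a) := by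
  have hlow := (integrable_cosh_rpow_neg ha).const_mul a
  have hhigh := (integrable_cosh_rpow_neg (add_pos ha two_pos)).const_mul (a + 1)
  have hzero := integral_eq_zero_of_hasDerivAt_of_integrable (hasDerivAt_sinh_mul_cosh_rpow a)
    (hhigh.sub hlow) (integrable_sinh_mul_cosh_rpow ha)
  rw [integral_sub hhigh hlow, integral_const_mul, integral_const_mul, sub_eq_zero] at hzero
  rw [div_mul_eq_mul_div, eq_div_iff (by positivity), mul_comm]
  exact hzero

lemma deriv_cosh_rpow_neg_sq (b x : ℝ) :
    deriv (fun x => cosh x ^ (-b)) x ^ 2 =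
      b ^ 2 * (cosh x ^ (-(2 * b)) - cosh x ^ (-(2 * b + 2))) := by
  have hsq : (cosh x ^ (-b - 1)) ^ 2 = cosh x ^ (-(2 * b + 2)) := by
    rw [← rpow_mul_natCast (cosh_pos x).le]
    ring_nf
  have hsinh := sinh_sq_mul_cosh_rpow (-(2 * b + 2)) x
  rw [neg_add, neg_add_cancel_right, ← neg_add] at hsinh
  rw [(hasDerivAt_cosh_rpow (-b) x).deriv, mul_pow, mul_pow, hsq]
  linear_combination b ^ 2 * hsinh

lemma integral_deriv_cosh_rpow_neg_sq {b : ℝ} (hb : 0 < b) :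
    ∫ x : ℝ, deriv (fun x => cosh x ^ (-b)) x ^ 2 =
      b ^ 2 / (2 * b + 1) * ∫ x : ℝ, cosh x ^ (-(2 * b)) := by
  have hb₂ : 0 < 2 * b := by positivity
  simp_rw [deriv_cosh_rpow_neg_sq]
  rw [integral_const_mul, integral_sub (integrable_cosh_rpow_neg hb₂)
    (integrable_cosh_rpow_neg (add_pos hb₂ two_pos)), integral_cosh_rpow_neg_add_two hb₂]
  field_simp
  ring

/-- The line soliton `u_{μ,*}`, i.e. the even positive solution of `-u'' + μ u = u ^ (p - 1)` on `ℝ`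
decaying at infinity, given by its closed form for `p > 2` and `μ > 0`. -/
noncomputable def soliton (p μ s : ℝ) : ℝ :=
  (p * μ / 2) ^ (1 / (p - 2)) * cosh ((p - 2) / 2 * √μ * s) ^ (-(2 / (p - 2)))

namespace soliton

variable {p μ : ℝ}

lemma rpow_eq (h : 0 ≤ p * μ) (q s : ℝ) :
    soliton p μ s ^ q =
      (p * μ / 2) ^ (q / (p - 2)) * cosh ((p - 2) / 2 * √μ * s) ^ (-(2 * q / (p - 2))) := by
  have hcosh := (cosh_pos ((p - 2) / 2 * √μ * s)).le
  rw [soliton, mul_rpow (by positivity) (by positivity), ← rpow_mul (by positivity),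
    ← rpow_mul hcosh]
  ring_nf

lemma integral_rpow (h : 0 ≤ p * μ) (q : ℝ) :
    ∫ s, soliton p μ s ^ q =
      (p * μ / 2) ^ (q / (p - 2)) *
        (|((p - 2) / 2 * √μ)⁻¹| * ∫ x : ℝ, cosh x ^ (-(2 * q / (p - 2)))) := by
  simp_rw [rpow_eq h]
  rw [integral_const_mul,
    Measure.integral_comp_mul_left (fun x => cosh x ^ (-(2 * q / (p - 2)))), smul_eq_mul]

lemma integral_rpow_add_sub_two (hp : 2 < p) (hμ : 0 < μ) {q : ℝ} (hq : 0 < q) :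
    ∫ s, soliton p μ s ^ (q + (p - 2)) =
      p * μ * q / (2 * q + (p - 2)) * ∫ s, soliton p μ s ^ q := by
  have hp₂ : 0 < p - 2 := sub_pos.2 hp
  have hpμ : 0 < p * μ := by positivity
  have hamp : (q + (p - 2)) / (p - 2) = q / (p - 2) + 1 := by field_simp
  have hexp : 2 * (q + (p - 2)) / (p - 2) = 2 * q / (p - 2) + 2 := by field_simp
  rw [integral_rpow hpμ.le, integral_rpow hpμ.le, hamp, hexp, rpow_add_one (by positivity),
    integral_cosh_rpow_neg_add_two (by positivity)]
  field_simp

lemma deriv_rpow_sq (h : 0 ≤ p * μ) (r s : ℝ) :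
    deriv (fun t => soliton p μ t ^ r) s ^ 2 =
      (p * μ / 2) ^ (2 * r / (p - 2)) * ((p - 2) / 2 * √μ) ^ 2 *
        deriv (fun x => cosh x ^ (-(2 * r / (p - 2)))) ((p - 2) / 2 * √μ * s) ^ 2 := by
  have hamp : ((p * μ / 2) ^ (r / (p - 2))) ^ 2 = (p * μ / 2) ^ (2 * r / (p - 2)) := by
    rw [← rpow_mul_natCast (by positivity)]
    ring_nf
  simp_rw [rpow_eq h]
  rw [deriv_const_mul_field,
    deriv_comp_mul_left _ (fun x => cosh x ^ (-(2 * r / (p - 2)))), smul_eq_mul, mul_pow, mul_pow,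
    hamp, ← mul_assoc]

lemma integral_deriv_rpow_sq (hp : 2 < p) (hμ : 0 < μ) {r : ℝ} (hr : 0 < r) :
    ∫ s, deriv (fun t => soliton p μ t ^ r) s ^ 2 =
      r ^ 2 * μ * (p - 2) / (4 * r + (p - 2)) * ∫ s, soliton p μ s ^ (2 * r) := by
  have hp₂ : 0 < p - 2 := sub_pos.2 hp
  have hpμ : 0 ≤ p * μ := by positivity
  set b := 2 * r / (p - 2) with hb
  have hexp : 2 * (2 * r) / (p - 2) = 2 * b := by rw [hb]; ring
  have hcoeff : ((p - 2) / 2 * √μ) ^ 2 * (b ^ 2 / (2 * b + 1)) =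
      r ^ 2 * μ * (p - 2) / (4 * r + (p - 2)) := by
    rw [mul_pow, sq_sqrt hμ.le, hb]
    field_simp
    ring
  simp_rw [deriv_rpow_sq hpμ]
  rw [integral_const_mul,
    Measure.integral_comp_mul_left (fun x => deriv (fun x => cosh x ^ (-b)) x ^ 2), smul_eq_mul,
    integral_deriv_cosh_rpow_neg_sq (by positivity), integral_rpow hpμ, hexp, ← hcoeff]
  ring

end soliton

/-- For `p > 2`, `μ > 0` and `u = u_{μ,*}` as in the paper:
(i) `∫ u^{2(p-1)} = (p²μ/(3p-2)) ∫ u^p`;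
(ii) `∫ u^{3p-4} = (2p³(p-1)μ²/((3p-2)(5p-6))) ∫ u^p`;
(iii) `∫ |(u^{p/2})'|² = (p²(p-2)μ/(4(3p-2))) ∫ u^p`. -/
theorem statement8 (p μ : ℝ) (hp : 2 < p) (hμ : 0 < μ)
    (u : ℝ → ℝ)
    (hu : ∀ s, u s = (p * μ / 2) ^ (1 / (p - 2)) *
      Real.cosh ((p - 2) / 2 * Real.sqrt μ * s) ^ (-(2 / (p - 2)))) :
    (∫ s : ℝ, u s ^ (2 * (p - 1))) = p ^ 2 * μ / (3 * p - 2) * ∫ s : ℝ, u s ^ p ∧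
    (∫ s : ℝ, u s ^ (3 * p - 4)) =
      2 * p ^ 3 * (p - 1) * μ ^ 2 / ((3 * p - 2) * (5 * p - 6)) * ∫ s : ℝ, u s ^ p ∧
    (∫ s : ℝ, deriv (fun t => u t ^ (p / 2)) s ^ 2) =
      p ^ 2 * (p - 2) * μ / (4 * (3 * p - 2)) * ∫ s : ℝ, u s ^ p := by
  obtain rfl : u = soliton p μ := funext hu
  have h_first : ∫ s, soliton p μ s ^ (2 * (p - 1)) =
      p ^ 2 * μ / (3 * p - 2) * ∫ s, soliton p μ s ^ p := by
    rw [show 2 * (p - 1) = p + (p - 2) by ring,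
      soliton.integral_rpow_add_sub_two hp hμ (by linarith)]
    ring
  have h_second : ∫ s, soliton p μ s ^ (3 * p - 4) =
      2 * p * (p - 1) * μ / (5 * p - 6) * ∫ s, soliton p μ s ^ (2 * (p - 1)) := by
    rw [show 3 * p - 4 = 2 * (p - 1) + (p - 2) by ring,
      soliton.integral_rpow_add_sub_two hp hμ (by linarith)]
    ring
  refine ⟨h_first, ?_, ?_⟩
  · rw [h_second, h_first, ← mul_assoc, div_mul_div_comm]
    ring
  · rw [soliton.integral_deriv_rpow_sq hp hμ (by linarith), mul_div_cancel₀ p two_ne_zero,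
      show 4 * (p / 2) + (p - 2) = 3 * p - 2 by ring]
    field_simp
    ring
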